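/- Let n ≥ 2 and γ ∈ (0,1). There exists a constant C > 0, depending only on n and γ, such that for every Schwartz function f : ℝⁿ → ℝ, | ∫_{ℝⁿ} (Λ^γ f(0) − Λ^γ f(x)) e^{−|x|} / |x|^n dx | ≤ C ∫_{ℝⁿ} |f(0) − f(x)| · ln(e + 1/|x|) / |x|^{n+γ} dx, where Λ^γ f(x) := ∫_{ℝⁿ} (f(x) − f(x+y)) / |y|^{n+γ} dy. -/

import Mathlib

open MeasureTheory

/-!
Write `w x = e⁻‖x‖ / ‖x‖ᵈ`, `d` the dimension, and `p = d + γ`. Centring each of the two singular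
integrals at its own base point, `Λf 0 - Λf x = ∫ D x z dz` with
`D x z = (f 0 - f z) ‖z‖⁻ᵖ - (f x - f z) ‖z - x‖⁻ᵖ`, and `w x * D x z` is absolutely integrable on
the product space. It differs from `(f 0 - f z) * K z x`, where
`K z x = w x ‖z‖⁻ᵖ + (w z - w x) ‖x - z‖⁻ᵖ`, by a function that is antisymmetric in `x` and `z`. The
two therefore have the same integral, and everything reduces to the kernel bound
`∫ |K z x| dx ≤ C log (e + 1 / ‖z‖) ‖z‖⁻ᵖ`. At scale `‖z‖ / 2` the increment of `w` tames
`‖x - z‖⁻ᵖ` near `z`, because `p < d + 1`, and the increment of `‖·‖⁻ᵖ` tames `w` near the origin;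
the logarithm is the mass of `w` outside a ball.
-/

section

open Set Metric Filter Module Real Topology
open scoped NNReal

theorem abs_rpow_neg_sub_rpow_neg_le {p m a b : ℝ} (hp : 0 ≤ p) (hm : 0 < m) (ha : m ≤ a)
    (hb : m ≤ b) : |a ^ (-p) - b ^ (-p)| ≤ p * m ^ (-p - 1) * |a - b| := by
  refine (convex_Ici m).norm_image_sub_le_of_norm_hasDerivWithin_le (f := fun t : ℝ => t ^ (-p))
    (f' := fun t => -p * t ^ (-p - 1)) (fun t ht => ?_) (fun t ht => ?_) hb ha
  · exact (hasDerivAt_rpow_const (.inl (hm.trans_le ht).ne')).hasDerivWithinAt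
  · have ht0 : 0 < t := hm.trans_le ht
    rw [norm_mul, norm_neg, norm_of_nonneg hp, norm_of_nonneg (by positivity)]
    exact mul_le_mul_of_nonneg_left (rpow_le_rpow_of_nonpos hm ht (by linarith)) hp

theorem abs_exp_neg_sub_exp_neg_le {m a b : ℝ} (ha : m ≤ a) (hb : m ≤ b) :
    |exp (-a) - exp (-b)| ≤ exp (-m) * |a - b| := by
  refine (convex_Ici m).norm_image_sub_le_of_norm_hasDerivWithin_le (f := fun t : ℝ => exp (-t))
    (f' := fun t => exp (-t) * -1) (fun t _ => (hasDerivAt_neg t).exp.hasDerivWithinAt)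
    (fun t ht => ?_) hb ha
  simpa using ht

theorem exp_neg_le_inv_one_add {t : ℝ} (ht : 0 ≤ t) : exp (-t) ≤ (1 + t)⁻¹ := by
  rw [exp_neg]
  gcongr
  linarith [add_one_le_exp t]

theorem one_le_log_exp_one_add {s : ℝ} (hs : 0 ≤ s) : 1 ≤ log (exp 1 + s) := by
  rw [le_log_iff_exp_le (by positivity)]
  linarith

theorem log_exp_one_add_inv_le_rpow {δ t : ℝ} (hδ : 0 < δ) (ht : 0 < t) (ht1 : t ≤ 1) :
    log (exp 1 + 1 / t) ≤ (exp 1 + 1) ^ δ / δ * t ^ (-δ) := by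
  have harg : exp 1 + 1 / t ≤ (exp 1 + 1) / t := by
    rw [add_div]
    gcongr
    exact le_div_self (exp_pos 1).le ht ht1
  calc log (exp 1 + 1 / t) ≤ (exp 1 + 1 / t) ^ δ / δ := log_le_rpow_div (by positivity) hδ
    _ ≤ ((exp 1 + 1) / t) ^ δ / δ := by gcongr
    _ = (exp 1 + 1) ^ δ / δ * t ^ (-δ) := by
      rw [div_rpow (by positivity) ht.le, rpow_neg ht.le]
      ring

theorem log_exp_one_add_inv_le_exp_one {t : ℝ} (ht : 1 ≤ t) : log (exp 1 + 1 / t) ≤ exp 1 := by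
  have hinv : 1 / t ≤ 1 := div_le_self zero_le_one ht
  linarith [log_le_sub_one_of_pos (show 0 < exp 1 + 1 / t by positivity)]

theorem log_one_add_two_div_le {t : ℝ} (ht : 0 < t) :
    log (1 + 2 / t) ≤ 2 * log (exp 1 + 1 / t) := by
  have harg : 1 + 2 / t ≤ (exp 1 + 1 / t) ^ 2 := by
    have hexp : 1 ≤ exp 1 := by simp
    have hcross : 2 / t ≤ 2 * exp 1 * (1 / t) := by
      rw [mul_assoc, mul_one_div, mul_div_assoc']
      gcongr
      linarith
    nlinarith [sq_nonneg (1 / t)]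
  calc log (1 + 2 / t) ≤ log ((exp 1 + 1 / t) ^ 2) := log_le_log (by positivity) harg
    _ = 2 * log (exp 1 + 1 / t) := by simp [log_pow]

theorem hasDerivAt_neg_log_one_add_inv {t : ℝ} (ht : 0 < t) :
    HasDerivAt (fun t : ℝ => -log (1 + t⁻¹)) (t⁻¹ * (1 + t)⁻¹) t := by
  convert! (((hasDerivAt_inv ht.ne').const_add 1).log (by positivity)).neg using 1
  field_simp
  ring

theorem tendsto_neg_log_one_add_inv_atTop :
    Tendsto (fun t : ℝ => -log (1 + t⁻¹)) atTop (𝓝 0) := by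
  have harg : Tendsto (fun t : ℝ => 1 + t⁻¹) atTop (𝓝 1) := by
    simpa using tendsto_inv_atTop_zero.const_add (1 : ℝ)
  simpa using (harg.log one_ne_zero).neg

theorem integrableOn_Ioi_inv_mul_one_add_inv {r : ℝ} (hr : 0 < r) :
    IntegrableOn (fun t : ℝ => t⁻¹ * (1 + t)⁻¹) (Ioi r) :=
  integrableOn_Ioi_deriv_of_nonneg' (fun _ ht => hasDerivAt_neg_log_one_add_inv (hr.trans_le ht))
    (fun t ht => by have : 0 < t := hr.trans ht; positivity) tendsto_neg_log_one_add_inv_atTop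

theorem integral_Ioi_inv_mul_one_add_inv {r : ℝ} (hr : 0 < r) :
    ∫ t in Ioi r, t⁻¹ * (1 + t)⁻¹ = log (1 + r⁻¹) := by
  rw [integral_Ioi_of_hasDerivAt_of_tendsto'
    (fun _ ht => hasDerivAt_neg_log_one_add_inv (hr.trans_le ht))
    (integrableOn_Ioi_inv_mul_one_add_inv hr) tendsto_neg_log_one_add_inv_atTop]
  ring

/-- The radial profile `e⁻ᵗ / tˢ` of the weight; negative real powers are used instead of quotients,
and at `t = 0` the value is `0` for `s ≠ 0`. -/
noncomputable def expWeight (s t : ℝ) : ℝ := exp (-t) * t ^ (-s)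

theorem expWeight_nonneg (s : ℝ) {t : ℝ} (ht : 0 ≤ t) : 0 ≤ expWeight s t := by
  unfold expWeight
  positivity

theorem measurable_expWeight (s : ℝ) : Measurable (expWeight s) := by
  unfold expWeight
  fun_prop

theorem expWeight_le_rpow (s : ℝ) {t : ℝ} (ht : 0 ≤ t) : expWeight s t ≤ t ^ (-s) :=
  mul_le_of_le_one_left (by positivity) (exp_le_one_iff.mpr (neg_nonpos.mpr ht))

theorem expWeight_le_rpow_of_le {s m t : ℝ} (hs : 0 ≤ s) (hm : 0 < m) (ht : m ≤ t) :
    expWeight s t ≤ m ^ (-s) :=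
  (expWeight_le_rpow s (hm.le.trans ht)).trans
    (rpow_le_rpow_of_nonpos hm ht (neg_nonpos.mpr hs))

theorem abs_expWeight_sub_le {s m a b : ℝ} (hs : 0 ≤ s) (hm : 0 < m) (ha : m ≤ a) (hb : m ≤ b) :
    |expWeight s a - expWeight s b| ≤ (s + 1) * m ^ (-s - 1) * |a - b| := by
  have hexp_a : exp (-a) ≤ 1 := exp_le_one_iff.mpr (by linarith)
  have hexp_m : exp (-m) ≤ m⁻¹ :=
    (exp_neg_le_inv_one_add hm.le).trans (inv_anti₀ hm (by linarith))
  have hb_rpow : b ^ (-s) ≤ m ^ (-s) := rpow_le_rpow_of_nonpos hm hb (neg_nonpos.mpr hs)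
  have hb0 : 0 ≤ b ^ (-s) := rpow_nonneg (hm.le.trans hb) _
  calc |expWeight s a - expWeight s b|
      = |exp (-a) * (a ^ (-s) - b ^ (-s)) + b ^ (-s) * (exp (-a) - exp (-b))| := by
        unfold expWeight
        ring_nf
    _ ≤ exp (-a) * |a ^ (-s) - b ^ (-s)| + b ^ (-s) * |exp (-a) - exp (-b)| := by
        refine (abs_add_le _ _).trans_eq ?_
        rw [abs_mul, abs_mul, abs_exp, abs_of_nonneg hb0]
    _ ≤ 1 * (s * m ^ (-s - 1) * |a - b|) + m ^ (-s) * (m⁻¹ * |a - b|) := by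
        gcongr
        · exact abs_rpow_neg_sub_rpow_neg_le hs hm ha hb
        · exact (abs_exp_neg_sub_exp_neg_le ha hb).trans (by gcongr)
    _ = (s + 1) * m ^ (-s - 1) * |a - b| := by
        rw [rpow_sub_one hm.ne']
        ring

theorem mul_rpow_neg_le (p : ℝ) {t : ℝ} (ht : 0 ≤ t) : t * t ^ (-p) ≤ t ^ (-(p - 1)) := by
  rcases ht.eq_or_lt with rfl | ht
  · rw [zero_mul]
    positivity
  · rw [neg_sub, sub_eq_add_neg, rpow_add ht, rpow_one]

theorem rpow_sub_one_mul_rpow_neg {t : ℝ} (ht : 0 < t) (d p : ℝ) :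
    t ^ (d - 1) * t ^ (-p) = t ^ (d - p - 1) := by
  rw [← rpow_add ht]
  ring_nf

theorem rpow_sub_one_mul_expWeight {t : ℝ} (ht : 0 < t) (d : ℝ) :
    t ^ (d - 1) * expWeight d t = t⁻¹ * exp (-t) := by
  rw [expWeight, mul_left_comm, rpow_sub_one_mul_rpow_neg ht, sub_self, zero_sub, rpow_neg_one,
    mul_comm]

theorem inv_mul_exp_neg_le {t : ℝ} (ht : 0 < t) : t⁻¹ * exp (-t) ≤ t⁻¹ * (1 + t)⁻¹ :=
  mul_le_mul_of_nonneg_left (exp_neg_le_inv_one_add ht.le) (inv_nonneg.mpr ht.le)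

theorem integrableOn_Ioi_inv_mul_exp_neg {r : ℝ} (hr : 0 < r) :
    IntegrableOn (fun t : ℝ => t⁻¹ * exp (-t)) (Ioi r) := by
  refine (integrableOn_Ioi_inv_mul_one_add_inv hr).mono' (by fun_prop) ?_
  filter_upwards [ae_restrict_mem measurableSet_Ioi] with t ht
  have ht0 : 0 < t := hr.trans ht
  rw [norm_of_nonneg (by positivity)]
  exact inv_mul_exp_neg_le ht0

theorem integral_Ioi_inv_mul_exp_neg_le {r : ℝ} (hr : 0 < r) :
    ∫ t in Ioi r, t⁻¹ * exp (-t) ≤ log (1 + r⁻¹) := by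
  rw [← integral_Ioi_inv_mul_one_add_inv hr]
  exact setIntegral_mono_on (integrableOn_Ioi_inv_mul_exp_neg hr)
    (integrableOn_Ioi_inv_mul_one_add_inv hr) measurableSet_Ioi
    fun t ht => inv_mul_exp_neg_le (hr.trans ht)

theorem ball_eq_norm_sub_preimage {E : Type*} [SeminormedAddCommGroup E] (z : E) (r : ℝ) :
    ball z r = (‖· - z‖) ⁻¹' Iio r := by
  ext x
  simp only [mem_ball_iff_norm, mem_preimage, mem_Iio]

theorem compl_ball_eq_norm_sub_preimage {E : Type*} [SeminormedAddCommGroup E] (z : E) (r : ℝ) :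
    (ball z r)ᶜ = (‖· - z‖) ⁻¹' Ici r := by
  ext x
  simp only [mem_compl_iff, mem_ball_iff_norm, not_lt, mem_preimage, mem_Ici]

theorem smul_indicator_eq_indicator_rpow {E : Type*} [NormedAddCommGroup E] [NormedSpace ℝ E]
    [FiniteDimensional ℝ E] [Nontrivial E] (S : Set ℝ) (u : ℝ → ℝ) :
    (fun t : ℝ => t ^ (finrank ℝ E - 1) • S.indicator u t) =
      S.indicator fun t => t ^ ((finrank ℝ E : ℝ) - 1) * u t := by
  ext t
  rw [← Nat.cast_pred finrank_pos]
  simp only [rpow_natCast, smul_eq_mul, ← indicator_const_mul]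
  rfl

section Radial

variable {E : Type*} [NormedAddCommGroup E] [NormedSpace ℝ E] [FiniteDimensional ℝ E]
  [Nontrivial E] [MeasurableSpace E] [BorelSpace E] (μ : Measure E) [μ.IsAddHaarMeasure]

theorem integrableOn_norm_sub_preimage (z : E) {S : Set ℝ} (hS : MeasurableSet S) (u : ℝ → ℝ) :
    IntegrableOn (fun x => u ‖x - z‖) ((‖· - z‖) ⁻¹' S) μ ↔
      IntegrableOn (fun t => t ^ ((finrank ℝ E : ℝ) - 1) * u t) (Ioi 0 ∩ S) := by
  rw [← integrable_indicator_iff (hS.preimage (by fun_prop)),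
    show ((‖· - z‖) ⁻¹' S).indicator (fun x => u ‖x - z‖) = fun x => S.indicator u ‖x - z‖
      from rfl,
    show (fun x => S.indicator u ‖x - z‖) = (fun x => S.indicator u ‖x‖) ∘ (· - z) from rfl,
    (measurePreserving_sub_right μ z).integrable_comp_emb (measurableEmbedding_subRight z),
    integrable_fun_norm_addHaar, smul_indicator_eq_indicator_rpow, IntegrableOn,
    integrable_indicator_iff hS, IntegrableOn, Measure.restrict_restrict hS, inter_comm,
    ← IntegrableOn]

theorem setIntegral_norm_sub_preimage (z : E) {S : Set ℝ} (hS : MeasurableSet S) (u : ℝ → ℝ) :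
    ∫ x in (‖· - z‖) ⁻¹' S, u ‖x - z‖ ∂μ =
      μ.toSphere.real univ * ∫ t in Ioi 0 ∩ S, t ^ ((finrank ℝ E : ℝ) - 1) * u t := by
  rw [← integral_indicator (hS.preimage (by fun_prop)),
    show ((‖· - z‖) ⁻¹' S).indicator (fun x => u ‖x - z‖) = fun x => S.indicator u ‖x - z‖
      from rfl,
    integral_sub_right_eq_self (fun x => S.indicator u ‖x‖),
    integral_fun_norm_addHaar, smul_indicator_eq_indicator_rpow, setIntegral_indicator hS,
    Measure.toSphere_real_apply_univ, nsmul_eq_mul, smul_eq_mul, mul_assoc]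

theorem integrableOn_ball_norm_sub_rpow {p : ℝ} (hp : p < finrank ℝ E) (z : E) (r : ℝ) :
    IntegrableOn (fun x => ‖x - z‖ ^ (-p)) (ball z r) μ := by
  rw [ball_eq_norm_sub_preimage, integrableOn_norm_sub_preimage μ z measurableSet_Iio (· ^ (-p)),
    Ioi_inter_Iio]
  rcases le_or_gt r 0 with hr | hr
  · simp [hr]
  refine ((intervalIntegral.integrableOn_Ioo_rpow_iff hr).mpr ?_).congr_fun
    (fun t ht => (rpow_sub_one_mul_rpow_neg ht.1 _ p).symm) measurableSet_Ioo
  linarith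

theorem setIntegral_ball_norm_sub_rpow {p r : ℝ} (hp : p < finrank ℝ E) (hr : 0 ≤ r) (z : E) :
    ∫ x in ball z r, ‖x - z‖ ^ (-p) ∂μ =
      μ.toSphere.real univ * (r ^ (finrank ℝ E - p) / (finrank ℝ E - p)) := by
  rw [ball_eq_norm_sub_preimage, setIntegral_norm_sub_preimage μ z measurableSet_Iio (· ^ (-p)),
    Ioi_inter_Iio, setIntegral_congr_fun measurableSet_Ioo
      fun t ht => rpow_sub_one_mul_rpow_neg ht.1 _ p,
    ← integral_Ioc_eq_integral_Ioo, ← intervalIntegral.integral_of_le hr,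
    integral_rpow (.inl (by linarith)), sub_add_cancel, zero_rpow (by linarith), sub_zero]

theorem integrableOn_compl_ball_norm_sub_rpow {p r : ℝ} (hp : finrank ℝ E < p) (hr : 0 < r)
    (z : E) : IntegrableOn (fun x => ‖x - z‖ ^ (-p)) (ball z r)ᶜ μ := by
  rw [compl_ball_eq_norm_sub_preimage, integrableOn_norm_sub_preimage μ z measurableSet_Ici
      (· ^ (-p)), inter_eq_right.mpr (Ici_subset_Ioi.mpr hr), integrableOn_Ici_iff_integrableOn_Ioi]
  refine (integrableOn_Ioi_rpow_of_lt (by linarith) hr).congr_fun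
    (fun t ht => (rpow_sub_one_mul_rpow_neg (hr.trans ht) _ p).symm) measurableSet_Ioi

theorem setIntegral_compl_ball_norm_sub_rpow {p r : ℝ} (hp : finrank ℝ E < p) (hr : 0 < r)
    (z : E) : ∫ x in (ball z r)ᶜ, ‖x - z‖ ^ (-p) ∂μ =
      μ.toSphere.real univ * (r ^ (finrank ℝ E - p) / (p - finrank ℝ E)) := by
  rw [compl_ball_eq_norm_sub_preimage, setIntegral_norm_sub_preimage μ z measurableSet_Ici
      (· ^ (-p)), inter_eq_right.mpr (Ici_subset_Ioi.mpr hr), integral_Ici_eq_integral_Ioi,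
    setIntegral_congr_fun measurableSet_Ioi
      fun t ht => rpow_sub_one_mul_rpow_neg (hr.trans ht) _ p,
    integral_Ioi_rpow_of_lt (by linarith) hr, sub_add_cancel, ← neg_sub p, neg_div_neg_eq]

theorem integrableOn_compl_ball_expWeight {r : ℝ} (hr : 0 < r) (z : E) :
    IntegrableOn (fun x => expWeight (finrank ℝ E) ‖x - z‖) (ball z r)ᶜ μ := by
  rw [compl_ball_eq_norm_sub_preimage, integrableOn_norm_sub_preimage μ z measurableSet_Ici,
    inter_eq_right.mpr (Ici_subset_Ioi.mpr hr), integrableOn_Ici_iff_integrableOn_Ioi]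
  exact (integrableOn_Ioi_inv_mul_exp_neg hr).congr_fun
    (fun t ht => (rpow_sub_one_mul_expWeight (hr.trans ht) _).symm) measurableSet_Ioi

theorem setIntegral_compl_ball_expWeight_le {r : ℝ} (hr : 0 < r) (z : E) :
    ∫ x in (ball z r)ᶜ, expWeight (finrank ℝ E) ‖x - z‖ ∂μ ≤
      μ.toSphere.real univ * log (1 + r⁻¹) := by
  rw [compl_ball_eq_norm_sub_preimage, setIntegral_norm_sub_preimage μ z measurableSet_Ici,
    inter_eq_right.mpr (Ici_subset_Ioi.mpr hr), integral_Ici_eq_integral_Ioi,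
    setIntegral_congr_fun measurableSet_Ioi
      fun t ht => rpow_sub_one_mul_expWeight (hr.trans ht) _]
  exact mul_le_mul_of_nonneg_left (integral_Ioi_inv_mul_exp_neg_le hr) measureReal_nonneg

theorem integrable_norm_rpow_mul_expWeight {α : ℝ} (hα : 0 < α) :
    Integrable (fun x : E => ‖x‖ ^ α * expWeight (finrank ℝ E) ‖x‖) μ := by
  rw [integrable_fun_norm_addHaar μ (f := fun t => t ^ α * expWeight (finrank ℝ E) t)]
  refine (GammaIntegral_convergent hα).congr_fun (fun t (ht : 0 < t) => ?_) measurableSet_Ioi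
  rw [smul_eq_mul, ← rpow_natCast, Nat.cast_pred finrank_pos, mul_left_comm,
    rpow_sub_one_mul_expWeight ht]
  beta_reduce
  rw [rpow_sub_one ht.ne']
  ring

end Radial

section Kernel

variable {E : Type*} [NormedAddCommGroup E]

/-- The kernel multiplying `f 0 - f z` once the pairing of `Λf 0 - Λf` with the weight has been
symmetrized in `x` and `z`; for `Λ` of order `γ` in dimension `d`, it is used with `s = d` and
`p = d + γ`. -/
noncomputable def symmetrizedKernel (s p : ℝ) (z x : E) : ℝ :=
  expWeight s ‖x‖ * ‖z‖ ^ (-p) + (expWeight s ‖z‖ - expWeight s ‖x‖) * ‖x - z‖ ^ (-p)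

theorem measurable_symmetrizedKernel [MeasurableSpace E] [BorelSpace E]
    [SecondCountableTopology E] (s p : ℝ) :
    Measurable fun q : E × E => symmetrizedKernel s p q.1 q.2 := by
  have hw := measurable_expWeight s
  unfold symmetrizedKernel
  fun_prop

variable {s p m : ℝ} {z x : E}

theorem abs_norm_rpow_neg_sub_norm_rpow_neg_le {a b : E} (hp : 0 ≤ p) (hm : 0 < m) (ha : m ≤ ‖a‖)
    (hb : m ≤ ‖b‖) : |‖a‖ ^ (-p) - ‖b‖ ^ (-p)| ≤ p * m ^ (-p - 1) * ‖a - b‖ :=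
  (abs_rpow_neg_sub_rpow_neg_le hp hm ha hb).trans
    (mul_le_mul_of_nonneg_left (abs_norm_sub_norm_le a b) (by positivity))

theorem abs_symmetrizedKernel_le_of_le_norm (hs : 0 ≤ s) (hp : 0 ≤ p) (hm : 0 < m)
    (hz : m ≤ ‖z‖) (hx : m ≤ ‖x‖) :
    |symmetrizedKernel s p z x| ≤
      m ^ (-p) * expWeight s ‖x‖ + (s + 1) * m ^ (-s - 1) * ‖x - z‖ ^ (-(p - 1)) := by
  have hw : |expWeight s ‖z‖ - expWeight s ‖x‖| ≤ (s + 1) * m ^ (-s - 1) * ‖x - z‖ := by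
    refine (abs_expWeight_sub_le hs hm hz hx).trans ?_
    rw [norm_sub_rev x z]
    gcongr
    exact abs_norm_sub_norm_le z x
  calc |symmetrizedKernel s p z x|
      ≤ expWeight s ‖x‖ * ‖z‖ ^ (-p) +
          |expWeight s ‖z‖ - expWeight s ‖x‖| * ‖x - z‖ ^ (-p) := by
        refine (abs_add_le _ _).trans_eq ?_
        rw [abs_mul, abs_mul, abs_of_nonneg (expWeight_nonneg s (norm_nonneg x)),
          abs_of_nonneg (rpow_nonneg (norm_nonneg z) _),
          abs_of_nonneg (rpow_nonneg (norm_nonneg (x - z)) _)]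
    _ ≤ expWeight s ‖x‖ * m ^ (-p) +
          (s + 1) * m ^ (-s - 1) * ‖x - z‖ * ‖x - z‖ ^ (-p) := by
        gcongr ?_ * ?_ + ?_ * _
        · exact expWeight_nonneg s (norm_nonneg x)
        · exact rpow_le_rpow_of_nonpos hm hz (neg_nonpos.mpr hp)
    _ ≤ m ^ (-p) * expWeight s ‖x‖ + (s + 1) * m ^ (-s - 1) * ‖x - z‖ ^ (-(p - 1)) := by
        rw [mul_comm (expWeight _ _), mul_assoc _ ‖x - z‖]
        gcongr
        exact mul_rpow_neg_le p (norm_nonneg _)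

theorem abs_symmetrizedKernel_le_add (hs : 0 ≤ s) (hm : 0 < m) (hz : m ≤ ‖z‖) :
    |symmetrizedKernel s p z x| ≤
      expWeight s ‖x‖ * |‖z‖ ^ (-p) - ‖x - z‖ ^ (-p)| + m ^ (-s) * ‖x - z‖ ^ (-p) := by
  have hwx : 0 ≤ expWeight s ‖x‖ := expWeight_nonneg s (norm_nonneg x)
  have hwz : 0 ≤ expWeight s ‖z‖ := expWeight_nonneg s (norm_nonneg z)
  calc |symmetrizedKernel s p z x|
      = |expWeight s ‖x‖ * (‖z‖ ^ (-p) - ‖x - z‖ ^ (-p)) + expWeight s ‖z‖ * ‖x - z‖ ^ (-p)| := by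
        unfold symmetrizedKernel
        ring_nf
    _ ≤ expWeight s ‖x‖ * |‖z‖ ^ (-p) - ‖x - z‖ ^ (-p)| + expWeight s ‖z‖ * ‖x - z‖ ^ (-p) := by
        refine (abs_add_le _ _).trans_eq ?_
        rw [abs_mul, abs_of_nonneg hwx,
          abs_of_nonneg (mul_nonneg hwz (rpow_nonneg (norm_nonneg (x - z)) _))]
    _ ≤ _ := by
        gcongr
        exact expWeight_le_rpow_of_le hs hm hz

theorem expWeight_mul_abs_norm_rpow_neg_sub_le (s : ℝ) (hp : 0 ≤ p) (hm : 0 < m) (hz : m ≤ ‖z‖)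
    (hxz : m ≤ ‖x - z‖) :
    expWeight s ‖x‖ * |‖z‖ ^ (-p) - ‖x - z‖ ^ (-p)| ≤ p * m ^ (-p - 1) * ‖x‖ ^ (-(s - 1)) := by
  calc expWeight s ‖x‖ * |‖z‖ ^ (-p) - ‖x - z‖ ^ (-p)|
      ≤ ‖x‖ ^ (-s) * (p * m ^ (-p - 1) * ‖x‖) := by
        gcongr
        · exact expWeight_le_rpow s (norm_nonneg x)
        · rw [norm_sub_rev] at hxz ⊢
          simpa only [sub_sub_cancel] using abs_norm_rpow_neg_sub_norm_rpow_neg_le hp hm hz hxz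
    _ = p * m ^ (-p - 1) * (‖x‖ * ‖x‖ ^ (-s)) := by ring
    _ ≤ p * m ^ (-p - 1) * ‖x‖ ^ (-(s - 1)) := by
        gcongr
        exact mul_rpow_neg_le s (norm_nonneg x)

/-- A majorant of `symmetrizedKernel s p z` for `2 * m ≤ ‖z‖`: each term is a radial function about
the origin or about `z`, cut off to the region where it is integrable. -/
noncomputable def kernelMajorant (s p m : ℝ) (z x : E) : ℝ :=
  m ^ (-p) * (ball (0 : E) m)ᶜ.indicator (fun x => expWeight s ‖x - 0‖) x +
    (s + 1) * m ^ (-s - 1) * (ball z m).indicator (fun x => ‖x - z‖ ^ (-(p - 1))) x +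
    m ^ (-s) * (ball z m)ᶜ.indicator (fun x => ‖x - z‖ ^ (-p)) x +
    p * m ^ (-p - 1) * (ball (0 : E) m).indicator (fun x => ‖x - 0‖ ^ (-(s - 1))) x

theorem abs_symmetrizedKernel_le_kernelMajorant (hs : 0 ≤ s) (hp : 0 ≤ p) (hm : 0 < m)
    (hz : 2 * m ≤ ‖z‖) (x : E) : |symmetrizedKernel s p z x| ≤ kernelMajorant s p m z x := by
  have hmz : m ≤ ‖z‖ := by linarith
  have hwx : 0 ≤ expWeight s ‖x‖ := expWeight_nonneg s (norm_nonneg x)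
  unfold kernelMajorant
  rcases lt_or_ge ‖x - z‖ m with hxz | hxz
  · have hx : m ≤ ‖x‖ := by linarith [norm_le_norm_add_norm_sub x z]
    simpa only [indicator, mem_compl_iff, mem_ball_iff_norm, sub_zero, hx.not_gt, hxz, not_true,
      not_false_eq_true, if_true, if_false, mul_zero, add_zero]
      using abs_symmetrizedKernel_le_of_le_norm hs hp hm hmz hx
  rcases lt_or_ge ‖x‖ m with hx | hx
  · have hdiff := expWeight_mul_abs_norm_rpow_neg_sub_le s hp hm hmz hxz
    simp only [indicator, mem_compl_iff, mem_ball_iff_norm, sub_zero, hx, hxz.not_gt, not_true,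
      not_false_eq_true, if_true, if_false, mul_zero, zero_add]
    linarith [abs_symmetrizedKernel_le_add (p := p) (x := x) hs hm hmz]
  · have hdiff : |‖z‖ ^ (-p) - ‖x - z‖ ^ (-p)| ≤ m ^ (-p) :=
      abs_sub_le_of_nonneg_of_le (rpow_nonneg (norm_nonneg z) _)
        (rpow_le_rpow_of_nonpos hm hmz (neg_nonpos.mpr hp)) (rpow_nonneg (norm_nonneg _) _)
        (rpow_le_rpow_of_nonpos hm hxz (neg_nonpos.mpr hp))
    simp only [indicator, mem_compl_iff, mem_ball_iff_norm, sub_zero, hx.not_gt, hxz.not_gt,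
      not_false_eq_true, if_true, if_false, mul_zero, add_zero]
    linarith [abs_symmetrizedKernel_le_add (p := p) (x := x) hs hm hmz,
      mul_le_mul_of_nonneg_left hdiff hwx]

end Kernel

section KernelIntegral

variable {E : Type*} [NormedAddCommGroup E] [NormedSpace ℝ E] [FiniteDimensional ℝ E]
  [Nontrivial E] [MeasurableSpace E] [BorelSpace E] (μ : Measure E) [μ.IsAddHaarMeasure]

variable {p m : ℝ}

theorem integrable_and_integral_kernelMajorant_le (hp : finrank ℝ E < p)
    (hp1 : p < finrank ℝ E + 1) (hm : 0 < m) (z : E) :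
    Integrable (kernelMajorant (finrank ℝ E) p m z) μ ∧
    ∫ x, kernelMajorant (finrank ℝ E) p m z x ∂μ ≤
      μ.toSphere.real univ * m ^ (-p) * (log (1 + m⁻¹) +
        ((finrank ℝ E + 1) / (finrank ℝ E + 1 - p) + 1 / (p - finrank ℝ E) + p)) := by
  have hball (y : E) : MeasurableSet (ball y m) := measurableSet_ball
  have hweight := (integrableOn_compl_ball_expWeight μ hm 0).integrable_indicator (hball 0).compl
  have hnear := (integrableOn_ball_norm_sub_rpow (p := p - 1) μ (by linarith) z
    m).integrable_indicator (hball z)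
  have hfar := (integrableOn_compl_ball_norm_sub_rpow μ hp hm
    z).integrable_indicator (hball z).compl
  have horigin := (integrableOn_ball_norm_sub_rpow (p := finrank ℝ E - 1) μ (by linarith) 0
    m).integrable_indicator (hball 0)
  unfold kernelMajorant
  refine ⟨by fun_prop, ?_⟩
  rw [integral_add (by fun_prop) (by fun_prop), integral_add (by fun_prop) (by fun_prop),
    integral_add (by fun_prop) (by fun_prop)]
  simp only [integral_const_mul, integral_indicator (hball _), integral_indicator (hball _).compl]
  rw [setIntegral_ball_norm_sub_rpow μ (by linarith) hm.le,
    setIntegral_ball_norm_sub_rpow μ (by linarith) hm.le,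
    setIntegral_compl_ball_norm_sub_rpow μ hp hm]
  have hscale_near : m ^ (-(finrank ℝ E : ℝ) - 1) * m ^ (finrank ℝ E - (p - 1)) = m ^ (-p) := by
    rw [← rpow_add hm]
    ring_nf
  have hscale_far : m ^ (-(finrank ℝ E : ℝ)) * m ^ (finrank ℝ E - p) = m ^ (-p) := by
    rw [← rpow_add hm]
    ring_nf
  have hscale_origin : m ^ (-p - 1) * m ^ ((finrank ℝ E : ℝ) - (finrank ℝ E - 1)) = m ^ (-p) := by
    rw [← rpow_add hm]
    ring_nf
  calc _ ≤ m ^ (-p) * (μ.toSphere.real univ * log (1 + m⁻¹)) + _ + _ + _ := by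
        gcongr
        exact setIntegral_compl_ball_expWeight_le μ hm 0
    _ = _ := by
        linear_combination μ.toSphere.real univ *
          ((finrank ℝ E + 1) / (finrank ℝ E + 1 - p) * hscale_near +
            1 / (p - finrank ℝ E) * hscale_far + p * hscale_origin)

theorem exists_integral_abs_symmetrizedKernel_le (hp : finrank ℝ E < p)
    (hp1 : p < finrank ℝ E + 1) :
    ∃ C > 0, ∀ z : E, z ≠ 0 → Integrable (symmetrizedKernel (finrank ℝ E) p z) μ ∧
      ∫ x, |symmetrizedKernel (finrank ℝ E) p z x| ∂μ ≤
        C * (log (exp 1 + 1 / ‖z‖) / ‖z‖ ^ p) := by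
  have hd : 0 < (finrank ℝ E : ℝ) := Nat.cast_pos.mpr finrank_pos
  set σ := μ.toSphere.real univ
  have : NeZero μ.toSphere := ⟨μ.toSphere_ne_zero⟩
  have hσ : 0 < σ := measureReal_univ_pos
  set A := ((finrank ℝ E : ℝ) + 1) / (finrank ℝ E + 1 - p) + 1 / (p - finrank ℝ E) + p
  have hA : 0 < A := add_pos (add_pos (div_pos (by linarith) (by linarith))
    (div_pos one_pos (by linarith))) (hd.trans hp)
  refine ⟨σ * 2 ^ p * (2 + A), by positivity, fun z hz => ?_⟩
  have hz0 : 0 < ‖z‖ := norm_pos_iff.mpr hz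
  have hle := abs_symmetrizedKernel_le_kernelMajorant (m := ‖z‖ / 2) hd.le (hd.trans hp).le
    (half_pos hz0) (mul_div_cancel₀ ‖z‖ two_ne_zero).le
  obtain ⟨hmaj, hmaj_le⟩ := integrable_and_integral_kernelMajorant_le μ hp hp1 (half_pos hz0) z
  have hint : Integrable (symmetrizedKernel (finrank ℝ E) p z) μ :=
    hmaj.mono' (measurable_symmetrizedKernel _ p).of_uncurry_left.aestronglyMeasurable
      (.of_forall hle)
  refine ⟨hint, ?_⟩
  have hlog := one_le_log_exp_one_add (one_div_nonneg.mpr hz0.le)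
  calc ∫ x, |symmetrizedKernel (finrank ℝ E) p z x| ∂μ
      ≤ ∫ x, kernelMajorant (finrank ℝ E) p (‖z‖ / 2) z x ∂μ := integral_mono hint.abs hmaj hle
    _ ≤ σ * (‖z‖ / 2) ^ (-p) * (log (1 + (‖z‖ / 2)⁻¹) + A) := hmaj_le
    _ ≤ σ * (‖z‖ / 2) ^ (-p) * (2 * log (exp 1 + 1 / ‖z‖) + A * log (exp 1 + 1 / ‖z‖)) := by
        gcongr
        · rw [inv_div]
          exact log_one_add_two_div_le hz0
        · exact le_mul_of_one_le_right hA.le hlog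
    _ = σ * 2 ^ p * (2 + A) * (log (exp 1 + 1 / ‖z‖) / ‖z‖ ^ p) := by
        rw [div_rpow hz0.le zero_le_two, rpow_neg hz0.le, rpow_neg zero_le_two, div_inv_eq_mul]
        ring

end KernelIntegral

section Difference

variable {E : Type*} [NormedAddCommGroup E]

/-- The integrand in `z` of `Λf 0 - Λf x` after each of the two integrals has been centred at its
own base point; in contrast to its two terms, it is integrable with a bound vanishing at `x = 0`. -/
noncomputable def centeredDifference (p : ℝ) (f : E → ℝ) (x z : E) : ℝ :=
  (f 0 - f z) * ‖z‖ ^ (-p) - (f x - f z) * ‖z - x‖ ^ (-p)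

theorem measurable_centeredDifference [MeasurableSpace E] [BorelSpace E]
    [SecondCountableTopology E] (p : ℝ) {f : E → ℝ} (hf : Measurable f) :
    Measurable fun q : E × E => centeredDifference p f q.1 q.2 := by
  unfold centeredDifference
  fun_prop

theorem centeredDifference_zero (p : ℝ) (f : E → ℝ) : centeredDifference p f 0 = 0 := by
  ext z
  simp only [centeredDifference, sub_zero, sub_self, Pi.zero_apply]

variable {p : ℝ} {f : E → ℝ} {K : ℝ≥0} {x z : E}

theorem abs_sub_mul_norm_rpow_neg_le (hf : LipschitzWith K f) (p : ℝ) (x z : E) :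
    |f x - f z| * ‖z - x‖ ^ (-p) ≤ K * ‖z - x‖ ^ (-(p - 1)) := by
  calc |f x - f z| * ‖z - x‖ ^ (-p) ≤ K * ‖z - x‖ * ‖z - x‖ ^ (-p) := by
        gcongr
        rw [norm_sub_rev]
        exact hf.norm_sub_le x z
    _ ≤ K * ‖z - x‖ ^ (-(p - 1)) := by
        rw [mul_assoc]
        gcongr
        exact mul_rpow_neg_le p (norm_nonneg _)

theorem abs_centeredDifference_le (hf : LipschitzWith K f) (p : ℝ) (x z : E) :
    |centeredDifference p f x z| ≤ K * (‖z‖ ^ (-(p - 1)) + ‖z - x‖ ^ (-(p - 1))) := by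
  have h0 := abs_sub_mul_norm_rpow_neg_le hf p 0 z
  have hx := abs_sub_mul_norm_rpow_neg_le hf p x z
  rw [sub_zero] at h0
  rw [mul_add]
  refine (abs_sub _ _).trans ?_
  rw [abs_mul, abs_mul, abs_of_nonneg (rpow_nonneg (norm_nonneg z) _),
    abs_of_nonneg (rpow_nonneg (norm_nonneg (z - x)) _)]
  exact add_le_add h0 hx

theorem abs_centeredDifference_le_of_two_mul_le (hf : LipschitzWith K f) (hp : 0 ≤ p) (hx : x ≠ 0)
    (hxz : 2 * ‖x‖ ≤ ‖z‖) :
    |centeredDifference p f x z| ≤ K * ((2 * p + 1) * 2 ^ p * ‖x‖ * ‖z‖ ^ (-p)) := by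
  have hx0 : 0 < ‖x‖ := norm_pos_iff.mpr hx
  obtain ⟨m, hm⟩ : ∃ m, ‖z‖ = 2 * m := ⟨‖z‖ / 2, by ring⟩
  have hm0 : 0 < m := by linarith
  have hzx : m ≤ ‖z - x‖ := by linarith [norm_le_norm_add_norm_sub' z x]
  have hker : |‖z‖ ^ (-p) - ‖z - x‖ ^ (-p)| ≤ p * m ^ (-p - 1) * ‖x‖ := by
    simpa only [sub_sub_cancel] using
      abs_norm_rpow_neg_sub_norm_rpow_neg_le (a := z) hp hm0 (by linarith) hzx
  have hf0z : |f 0 - f z| ≤ K * (2 * m) := by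
    simpa only [zero_sub, norm_neg, norm_eq_abs, hm] using hf.norm_sub_le 0 z
  have hf0x : |f 0 - f x| ≤ K * ‖x‖ := by
    simpa only [zero_sub, norm_neg, norm_eq_abs] using hf.norm_sub_le 0 x
  calc |centeredDifference p f x z|
      = |(f 0 - f z) * (‖z‖ ^ (-p) - ‖z - x‖ ^ (-p)) + (f 0 - f x) * ‖z - x‖ ^ (-p)| := by
        unfold centeredDifference
        ring_nf
    _ ≤ |f 0 - f z| * |‖z‖ ^ (-p) - ‖z - x‖ ^ (-p)| + |f 0 - f x| * ‖z - x‖ ^ (-p) := by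
        refine (abs_add_le _ _).trans_eq ?_
        rw [abs_mul, abs_mul, abs_of_nonneg (rpow_nonneg (norm_nonneg (z - x)) _)]
    _ ≤ K * (2 * m) * (p * m ^ (-p - 1) * ‖x‖) + K * ‖x‖ * m ^ (-p) := by
        have hkernel := rpow_le_rpow_of_nonpos hm0 hzx (neg_nonpos.mpr hp)
        gcongr
    _ = K * ((2 * p + 1) * 2 ^ p * ‖x‖ * ‖z‖ ^ (-p)) := by
        rw [hm, mul_rpow zero_le_two hm0.le, rpow_neg zero_le_two, rpow_sub_one hm0.ne']
        field_simp

/-- A majorant, up to the Lipschitz constant of `f`, of `centeredDifference p f x`. -/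
noncomputable def differenceMajorant (p : ℝ) (x z : E) : ℝ :=
  (ball (0 : E) (2 * ‖x‖)).indicator (fun z => ‖z - 0‖ ^ (-(p - 1))) z +
    (ball x (3 * ‖x‖)).indicator (fun z => ‖z - x‖ ^ (-(p - 1))) z +
    (2 * p + 1) * 2 ^ p * ‖x‖ *
      (ball (0 : E) (2 * ‖x‖))ᶜ.indicator (fun z => ‖z - 0‖ ^ (-p)) z

theorem abs_centeredDifference_le_differenceMajorant (hf : LipschitzWith K f) (hp : 0 ≤ p)
    (hx : x ≠ 0) (z : E) : |centeredDifference p f x z| ≤ K * differenceMajorant p x z := by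
  unfold differenceMajorant
  rcases lt_or_ge ‖z‖ (2 * ‖x‖) with hz | hz
  · have hzx : ‖z - x‖ < 3 * ‖x‖ := by linarith [norm_sub_le z x]
    simpa only [indicator, mem_compl_iff, mem_ball_iff_norm, sub_zero, hz, hzx, not_true,
      if_true, if_false, mul_zero, add_zero] using abs_centeredDifference_le hf p x z
  · have hnonneg : 0 ≤ (ball x (3 * ‖x‖)).indicator (fun z => ‖z - x‖ ^ (-(p - 1))) z :=
      indicator_nonneg (fun _ _ => by positivity) z
    refine (abs_centeredDifference_le_of_two_mul_le hf hp hx hz).trans ?_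
    simp only [indicator_of_notMem, indicator_of_mem, mem_compl_iff, mem_ball_iff_norm, sub_zero,
      hz.not_gt, not_false_eq_true, zero_add]
    gcongr
    exact le_add_of_nonneg_left hnonneg

end Difference

section DifferenceIntegral

variable {E : Type*} [NormedAddCommGroup E] [NormedSpace ℝ E] [FiniteDimensional ℝ E]
  [Nontrivial E] [MeasurableSpace E] [BorelSpace E] (μ : Measure E) [μ.IsAddHaarMeasure]
  {p : ℝ}

theorem exists_integral_differenceMajorant_eq (hp : finrank ℝ E < p) (hp1 : p < finrank ℝ E + 1) :
    ∃ C, ∀ x : E, x ≠ 0 → Integrable (differenceMajorant p x) μ ∧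
      ∫ z, differenceMajorant p x z ∂μ = C * ‖x‖ ^ (finrank ℝ E + 1 - p) := by
  set α := finrank ℝ E + 1 - p with hα
  refine ⟨μ.toSphere.real univ * ((2 ^ α + 3 ^ α) / α +
    (2 * p + 1) * 2 ^ p * 2 ^ (α - 1) / (p - finrank ℝ E)), fun x hx => ?_⟩
  have hx0 : 0 < ‖x‖ := norm_pos_iff.mpr hx
  have hnear (y : E) (r : ℝ) := (integrableOn_ball_norm_sub_rpow (p := p - 1) μ (by linarith) y
    r).integrable_indicator measurableSet_ball
  have hfar := (integrableOn_compl_ball_norm_sub_rpow μ hp (r := 2 * ‖x‖) (by positivity)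
    0).integrable_indicator measurableSet_ball.compl
  have hnear0 := hnear 0 (2 * ‖x‖)
  have hnearx := hnear x (3 * ‖x‖)
  unfold differenceMajorant
  refine ⟨(hnear0.add hnearx).add (hfar.const_mul _), ?_⟩
  rw [integral_add (by fun_prop) (by fun_prop), integral_add hnear0 hnearx,
    integral_const_mul, integral_indicator measurableSet_ball,
    integral_indicator measurableSet_ball, integral_indicator measurableSet_ball.compl,
    setIntegral_ball_norm_sub_rpow μ (by linarith) (by positivity),
    setIntegral_ball_norm_sub_rpow μ (by linarith) (by positivity),
    setIntegral_compl_ball_norm_sub_rpow μ hp (by positivity),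
    show finrank ℝ E - (p - 1) = α by rw [hα]; ring, show finrank ℝ E - p = α - 1 by rw [hα]; ring,
    mul_rpow zero_le_two hx0.le, mul_rpow zero_le_two hx0.le, mul_rpow zero_le_three hx0.le]
  have hscale : ‖x‖ * ‖x‖ ^ (α - 1) = ‖x‖ ^ α := by
    rw [rpow_sub_one hx0.ne', mul_div_cancel₀ _ hx0.ne']
  linear_combination
    μ.toSphere.real univ * ((2 * p + 1) * 2 ^ p * 2 ^ (α - 1) / (p - finrank ℝ E)) * hscale

theorem exists_integral_abs_centeredDifference_le (hp : finrank ℝ E < p)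
    (hp1 : p < finrank ℝ E + 1) :
    ∃ C, ∀ {K : ℝ≥0} {f : E → ℝ}, LipschitzWith K f → ∀ x,
      Integrable (centeredDifference p f x) μ ∧
      ∫ z, |centeredDifference p f x z| ∂μ ≤ C * K * ‖x‖ ^ (finrank ℝ E + 1 - p) := by
  obtain ⟨C, hC⟩ := exists_integral_differenceMajorant_eq μ hp hp1
  refine ⟨C, fun {K f} hf x => ?_⟩
  rcases eq_or_ne x 0 with rfl | hx
  · simp [centeredDifference_zero, zero_rpow (show finrank ℝ E + 1 - p ≠ 0 by linarith)]
  obtain ⟨hmaj, hmaj_eq⟩ := hC x hx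
  have hle := abs_centeredDifference_le_differenceMajorant hf ((Nat.cast_nonneg _).trans hp.le) hx
  have hint : Integrable (centeredDifference p f x) μ :=
    (hmaj.const_mul K).mono' (measurable_centeredDifference p
      hf.continuous.measurable).of_uncurry_left.aestronglyMeasurable (.of_forall hle)
  refine ⟨hint, (integral_mono hint.abs (hmaj.const_mul K) hle).trans_eq ?_⟩
  rw [integral_const_mul, hmaj_eq]
  ring

end DifferenceIntegral

theorem expWeight_mul_centeredDifference_sub {E : Type*} [NormedAddCommGroup E] (s p : ℝ)
    (f : E → ℝ) (x z : E) :
    expWeight s ‖x‖ * centeredDifference p f x z - (f 0 - f z) * symmetrizedKernel s p z x =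
      ‖x - z‖ ^ (-p) * (expWeight s ‖x‖ * (f 0 - f x) - expWeight s ‖z‖ * (f 0 - f z)) := by
  rw [centeredDifference, symmetrizedKernel, norm_sub_rev z x]
  ring

theorem integral_prod_eq_zero_of_antisymm {α : Type*} [MeasurableSpace α] {μ : Measure α}
    [SFinite μ] {F : α × α → ℝ} (hF : ∀ q, F q.swap = -F q) : ∫ q, F q ∂μ.prod μ = 0 := by
  have hswap := integral_prod_swap (μ := μ) (ν := μ) F
  simp only [hF, integral_neg] at hswap
  linarith

theorem integrable_mul_norm_rpow_neg {E : Type*} [NormedAddCommGroup E] [MeasurableSpace E]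
    [OpensMeasurableSpace E] {μ : Measure E} {p : ℝ} {g : E → ℝ} (hg : Measurable g)
    (hint : Integrable (fun z => |g z| * log (exp 1 + 1 / ‖z‖) / ‖z‖ ^ p) μ) :
    Integrable (fun z => g z * ‖z‖ ^ (-p)) μ := by
  refine hint.mono' (by fun_prop) (.of_forall fun z => ?_)
  rw [norm_mul, norm_of_nonneg (rpow_nonneg (norm_nonneg z) (-p)), rpow_neg (norm_nonneg z),
    ← div_eq_mul_inv]
  gcongr
  exact le_mul_of_one_le_right (norm_nonneg _) (one_le_log_exp_one_add (by positivity))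

section Pairing

variable {E : Type*} [NormedAddCommGroup E] [NormedSpace ℝ E] [FiniteDimensional ℝ E]
  [Nontrivial E] [MeasurableSpace E] [BorelSpace E] (μ : Measure E) [μ.IsAddHaarMeasure]
  {p : ℝ}

theorem integrable_expWeight_mul_centeredDifference (hp : finrank ℝ E < p)
    (hp1 : p < finrank ℝ E + 1) {K : ℝ≥0} {f : E → ℝ} (hf : LipschitzWith K f) :
    Integrable (fun q : E × E => expWeight (finrank ℝ E) ‖q.1‖ * centeredDifference p f q.1 q.2)
      (μ.prod μ) := by
  obtain ⟨C, hC⟩ := exists_integral_abs_centeredDifference_le μ hp hp1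
  have hmeas : Measurable fun q : E × E =>
      expWeight (finrank ℝ E) ‖q.1‖ * centeredDifference p f q.1 q.2 :=
    ((measurable_expWeight _).comp measurable_fst.norm).mul
      (measurable_centeredDifference p hf.continuous.measurable)
  refine (integrable_prod_iff hmeas.aestronglyMeasurable).mpr
    ⟨.of_forall fun x => (hC hf x).1.const_mul (expWeight (finrank ℝ E) ‖x‖), ?_⟩
  refine ((integrable_norm_rpow_mul_expWeight μ (α := finrank ℝ E + 1 - p)
    (by linarith)).const_mul (C * K)).mono'
    hmeas.aestronglyMeasurable.norm.integral_prod_right' (.of_forall fun x => ?_)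
  have hw : 0 ≤ expWeight (finrank ℝ E) ‖x‖ := expWeight_nonneg _ (norm_nonneg x)
  rw [norm_of_nonneg (integral_nonneg fun _ => norm_nonneg _)]
  calc ∫ z, ‖expWeight (finrank ℝ E) ‖x‖ * centeredDifference p f x z‖ ∂μ
      = expWeight (finrank ℝ E) ‖x‖ * ∫ z, |centeredDifference p f x z| ∂μ := by
        simp only [norm_mul, norm_of_nonneg hw, norm_eq_abs, integral_const_mul]
    _ ≤ expWeight (finrank ℝ E) ‖x‖ * (C * K * ‖x‖ ^ (finrank ℝ E + 1 - p)) := by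
        gcongr
        exact (hC hf x).2
    _ = C * K * (‖x‖ ^ (finrank ℝ E + 1 - p) * expWeight (finrank ℝ E) ‖x‖) := by ring

theorem exists_abs_integral_mul_symmetrizedKernel_le (hp : finrank ℝ E < p)
    (hp1 : p < finrank ℝ E + 1) :
    ∃ C > 0, ∀ {g : E → ℝ}, Measurable g →
      Integrable (fun z => |g z| * log (exp 1 + 1 / ‖z‖) / ‖z‖ ^ p) μ →
      Integrable (fun q : E × E => g q.2 * symmetrizedKernel (finrank ℝ E) p q.2 q.1)
        (μ.prod μ) ∧
      |∫ q : E × E, g q.2 * symmetrizedKernel (finrank ℝ E) p q.2 q.1 ∂μ.prod μ| ≤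
        C * ∫ z, |g z| * log (exp 1 + 1 / ‖z‖) / ‖z‖ ^ p ∂μ := by
  obtain ⟨C, hC0, hC⟩ := exists_integral_abs_symmetrizedKernel_le μ hp hp1
  refine ⟨C, hC0, fun {g} hg hint => ?_⟩
  have hmeas : Measurable fun q : E × E => g q.2 * symmetrizedKernel (finrank ℝ E) p q.2 q.1 :=
    (hg.comp measurable_snd).mul ((measurable_symmetrizedKernel _ p).comp measurable_swap)
  have hne : ∀ᵐ z ∂μ, z ≠ 0 := Measure.ae_ne μ 0
  have hinner : ∀ᵐ z ∂μ, ∫ x, |g z * symmetrizedKernel (finrank ℝ E) p z x| ∂μ ≤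
      C * (|g z| * log (exp 1 + 1 / ‖z‖) / ‖z‖ ^ p) := by
    filter_upwards [hne] with z hz
    simp only [abs_mul, integral_const_mul]
    refine (mul_le_mul_of_nonneg_left (hC z hz).2 (abs_nonneg _)).trans_eq ?_
    ring
  have hintR : Integrable (fun q : E × E => g q.2 * symmetrizedKernel (finrank ℝ E) p q.2 q.1)
      (μ.prod μ) := by
    refine (integrable_prod_iff' hmeas.aestronglyMeasurable).mpr
      ⟨hne.mono fun z hz => (hC z hz).1.const_mul (g z), ?_⟩
    refine (hint.const_mul C).mono'
      hmeas.aestronglyMeasurable.norm.prod_swap.integral_prod_right' (hinner.mono fun z hz => ?_)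
    rw [norm_of_nonneg (integral_nonneg fun _ => norm_nonneg _)]
    exact hz
  refine ⟨hintR, ?_⟩
  calc |∫ q : E × E, g q.2 * symmetrizedKernel (finrank ℝ E) p q.2 q.1 ∂μ.prod μ|
      ≤ ∫ q : E × E, |g q.2 * symmetrizedKernel (finrank ℝ E) p q.2 q.1| ∂μ.prod μ :=
        abs_integral_le_integral_abs
    _ = ∫ z, ∫ x, |g z * symmetrizedKernel (finrank ℝ E) p z x| ∂μ ∂μ :=
        integral_prod_symm _ hintR.abs
    _ ≤ ∫ z, C * (|g z| * log (exp 1 + 1 / ‖z‖) / ‖z‖ ^ p) ∂μ :=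
        integral_mono_ae hintR.abs.integral_prod_right (hint.const_mul C) hinner
    _ = C * ∫ z, |g z| * log (exp 1 + 1 / ‖z‖) / ‖z‖ ^ p ∂μ := integral_const_mul _ _

end Pairing

theorem sub_add_div_norm_rpow {E : Type*} [NormedAddCommGroup E] (p : ℝ) (f : E → ℝ) (x y : E) :
    (f x - f (x + y)) / ‖y‖ ^ p = (f x - f (x + y)) * ‖x + y - x‖ ^ (-p) := by
  rw [add_sub_cancel_left, rpow_neg (norm_nonneg y), div_eq_mul_inv]

theorem exists_lipschitzWith_schwartz {E : Type*} [NormedAddCommGroup E] [NormedSpace ℝ E]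
    (f : SchwartzMap E ℝ) : ∃ K, LipschitzWith K f :=
  ⟨(SchwartzMap.seminorm ℝ 0 1 f).toNNReal, lipschitzWith_of_nnnorm_fderiv_le f.differentiable
    fun x => by
      have := f.norm_iteratedFDeriv_le_seminorm ℝ 1 x
      rw [norm_iteratedFDeriv_one] at this
      exact NNReal.le_toNNReal_of_coe_le this⟩

theorem abs_sub_mul_log_div_norm_rpow_le {E : Type*} [NormedAddCommGroup E] {K : ℝ≥0} {f : E → ℝ}
    (hf : LipschitzWith K f) (p : ℝ) {δ : ℝ} (hδ : 0 < δ) {x : E} (hx : ‖x‖ ≤ 1) :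
    |f 0 - f x| * log (exp 1 + 1 / ‖x‖) / ‖x‖ ^ p ≤
      K * ((exp 1 + 1) ^ δ / δ) * ‖x‖ ^ (-(p + δ - 1)) := by
  rcases eq_or_ne x 0 with rfl | hx0
  · rw [sub_self, abs_zero, zero_mul, zero_div]
    positivity
  replace hx0 : 0 < ‖x‖ := norm_pos_iff.mpr hx0
  have hlip := abs_sub_mul_norm_rpow_neg_le hf p 0 x
  have hlog0 := zero_le_one.trans (one_le_log_exp_one_add (one_div_nonneg.mpr hx0.le))
  have hlog := log_exp_one_add_inv_le_rpow hδ hx0 hx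
  calc |f 0 - f x| * log (exp 1 + 1 / ‖x‖) / ‖x‖ ^ p
      = |f 0 - f x| * ‖x - 0‖ ^ (-p) * log (exp 1 + 1 / ‖x‖) := by
        rw [sub_zero, rpow_neg hx0.le]
        ring
    _ ≤ K * ‖x - 0‖ ^ (-(p - 1)) * ((exp 1 + 1) ^ δ / δ * ‖x‖ ^ (-δ)) := by gcongr
    _ = K * ((exp 1 + 1) ^ δ / δ) * ‖x‖ ^ (-(p + δ - 1)) := by
        rw [sub_zero, show -(p + δ - 1) = -(p - 1) + -δ by ring, rpow_add hx0]
        ring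

section FracLaplacian

variable {E : Type*} [NormedAddCommGroup E] [NormedSpace ℝ E] [MeasurableSpace E]

/-- The fractional Laplacian of order `γ` as the singular integral
`∫ (f x - f (x + y)) / ‖y‖ ^ (d + γ) dy`, where `d` is the dimension, without its positive
normalization constant. -/
noncomputable def fracLaplacian (γ : ℝ) (μ : Measure E) (f : E → ℝ) (x : E) : ℝ :=
  ∫ y, (f x - f (x + y)) / ‖y‖ ^ ((finrank ℝ E : ℝ) + γ) ∂μ

variable [FiniteDimensional ℝ E] [Nontrivial E] [BorelSpace E] (μ : Measure E)
  [μ.IsAddHaarMeasure] {γ : ℝ}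

theorem integrable_sub_mul_norm_sub_rpow_neg (hγ : γ ∈ Ioo 0 1) {K : ℝ≥0} {f : E → ℝ}
    (hf : LipschitzWith K f)
    (hint : Integrable (fun z => |f 0 - f z| * log (exp 1 + 1 / ‖z‖) /
      ‖z‖ ^ ((finrank ℝ E : ℝ) + γ)) μ) (x : E) :
    Integrable (fun z => (f x - f z) * ‖z - x‖ ^ (-((finrank ℝ E : ℝ) + γ))) μ := by
  obtain ⟨_, hC⟩ := exists_integral_abs_centeredDifference_le μ (p := finrank ℝ E + γ)
    (by linarith [hγ.1]) (by linarith [hγ.2])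
  convert (integrable_mul_norm_rpow_neg (measurable_const.sub hf.continuous.measurable)
    hint).sub (hC hf x).1 using 2 with z
  simp only [centeredDifference, Pi.sub_apply, sub_sub_cancel]

theorem fracLaplacian_sub_eq_integral_centeredDifference (hγ : γ ∈ Ioo 0 1) {K : ℝ≥0} {f : E → ℝ}
    (hf : LipschitzWith K f)
    (hint : Integrable (fun z => |f 0 - f z| * log (exp 1 + 1 / ‖z‖) /
      ‖z‖ ^ ((finrank ℝ E : ℝ) + γ)) μ) (x : E) :
    fracLaplacian γ μ f 0 - fracLaplacian γ μ f x =
      ∫ z, centeredDifference (finrank ℝ E + γ) f x z ∂μ := by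
  have htrans (x : E) : fracLaplacian γ μ f x =
      ∫ z, (f x - f z) * ‖z - x‖ ^ (-((finrank ℝ E : ℝ) + γ)) ∂μ := by
    simp only [fracLaplacian, sub_add_div_norm_rpow]
    exact integral_add_left_eq_self
      (fun z => (f x - f z) * ‖z - x‖ ^ (-((finrank ℝ E : ℝ) + γ))) x
  have hintg := integrable_sub_mul_norm_sub_rpow_neg μ hγ hf hint
  rw [htrans, htrans, ← integral_sub (hintg 0) (hintg x)]
  simp only [centeredDifference, sub_zero]

theorem integrable_sub_mul_log_div_norm_rpow {p : ℝ} (hp : finrank ℝ E < p)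
    (hp1 : p < finrank ℝ E + 1) {K : ℝ≥0} {B : ℝ} {f : E → ℝ} (hf : LipschitzWith K f)
    (hB : ∀ x, |f 0 - f x| ≤ B) :
    Integrable (fun x => |f 0 - f x| * log (exp 1 + 1 / ‖x‖) / ‖x‖ ^ p) μ := by
  obtain ⟨δ, hδ0, hδ⟩ : ∃ δ, 0 < δ ∧ p + δ < finrank ℝ E + 1 :=
    ⟨(finrank ℝ E + 1 - p) / 2, by linarith, by linarith⟩
  have hmeas : Measurable fun x => |f 0 - f x| * log (exp 1 + 1 / ‖x‖) / ‖x‖ ^ p := by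
    have := hf.continuous.measurable
    fun_prop
  have hnonneg (x : E) : 0 ≤ |f 0 - f x| * log (exp 1 + 1 / ‖x‖) / ‖x‖ ^ p := by
    have := one_le_log_exp_one_add (one_div_nonneg.mpr (norm_nonneg x))
    positivity
  rw [← integrableOn_univ, ← union_compl_self (ball (0 : E) 1), integrableOn_union]
  constructor
  · refine ((integrableOn_ball_norm_sub_rpow μ (p := p + δ - 1) (by linarith) 0 1).const_mul
      (K * ((exp 1 + 1) ^ δ / δ))).mono' hmeas.aestronglyMeasurable ?_
    filter_upwards [ae_restrict_mem measurableSet_ball] with x hx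
    rw [norm_of_nonneg (hnonneg x), sub_zero]
    exact abs_sub_mul_log_div_norm_rpow_le hf p hδ0 (mem_ball_zero_iff.mp hx).le
  · refine ((integrableOn_compl_ball_norm_sub_rpow μ hp one_pos 0).const_mul (B * exp 1)).mono'
      hmeas.aestronglyMeasurable ?_
    filter_upwards [ae_restrict_mem measurableSet_ball.compl] with x hx
    rw [mem_compl_iff, mem_ball_zero_iff, not_lt] at hx
    rw [norm_of_nonneg (hnonneg x), sub_zero, rpow_neg (norm_nonneg x), ← div_eq_mul_inv]
    have hB0 : 0 ≤ B := (abs_nonneg _).trans (hB 0)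
    gcongr ?_ * ?_ / _
    · exact zero_le_one.trans (one_le_log_exp_one_add (by positivity))
    · exact hB x
    · exact log_exp_one_add_inv_le_exp_one hx

theorem integrable_schwartz_sub_mul_log_div_norm_rpow {p : ℝ} (hp : finrank ℝ E < p)
    (hp1 : p < finrank ℝ E + 1) (f : SchwartzMap E ℝ) :
    Integrable (fun x => |f 0 - f x| * log (exp 1 + 1 / ‖x‖) / ‖x‖ ^ p) μ := by
  obtain ⟨K, hK⟩ := exists_lipschitzWith_schwartz f
  refine integrable_sub_mul_log_div_norm_rpow μ hp hp1 (B := 2 * SchwartzMap.seminorm ℝ 0 0 f) hK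
    fun x => (abs_sub _ _).trans ?_
  rw [two_mul]
  exact add_le_add (f.norm_le_seminorm ℝ 0) (f.norm_le_seminorm ℝ x)

theorem dissipation_weighted_inequality_general (hγ : γ ∈ Ioo 0 1) :
    ∃ C > 0, ∀ {K : ℝ≥0} {f : E → ℝ}, LipschitzWith K f →
      Integrable (fun x => |f 0 - f x| * log (exp 1 + 1 / ‖x‖) /
        ‖x‖ ^ ((finrank ℝ E : ℝ) + γ)) μ →
      (∀ x, Integrable (fun y => (f x - f (x + y)) / ‖y‖ ^ ((finrank ℝ E : ℝ) + γ)) μ) ∧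
      Integrable (fun x => (fracLaplacian γ μ f 0 - fracLaplacian γ μ f x) * exp (-‖x‖) /
        ‖x‖ ^ (finrank ℝ E : ℝ)) μ ∧
      |∫ x, (fracLaplacian γ μ f 0 - fracLaplacian γ μ f x) * exp (-‖x‖) /
          ‖x‖ ^ (finrank ℝ E : ℝ) ∂μ| ≤
        C * ∫ x, |f 0 - f x| * log (exp 1 + 1 / ‖x‖) / ‖x‖ ^ ((finrank ℝ E : ℝ) + γ) ∂μ := by
  have hp : (finrank ℝ E : ℝ) < finrank ℝ E + γ := by linarith [hγ.1]
  have hp1 : finrank ℝ E + γ < (finrank ℝ E : ℝ) + 1 := by linarith [hγ.2]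
  obtain ⟨C, hC0, hC⟩ := exists_abs_integral_mul_symmetrizedKernel_le μ hp hp1
  refine ⟨C, hC0, fun {K f} hf hint => ⟨fun x => ?_, ?_⟩⟩
  · simp only [sub_add_div_norm_rpow]
    exact (integrable_sub_mul_norm_sub_rpow_neg μ hγ hf hint x).comp_add_left x
  have hfibre : (fun x => (fracLaplacian γ μ f 0 - fracLaplacian γ μ f x) * exp (-‖x‖) /
      ‖x‖ ^ (finrank ℝ E : ℝ)) = fun x => ∫ z,
        expWeight (finrank ℝ E) ‖x‖ * centeredDifference (finrank ℝ E + γ) f x z ∂μ := by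
    ext x
    rw [integral_const_mul, ← fracLaplacian_sub_eq_integral_centeredDifference μ hγ hf hint,
      expWeight, rpow_neg (norm_nonneg x)]
    ring
  have hpair := integrable_expWeight_mul_centeredDifference μ hp hp1 hf
  obtain ⟨hsymm, hsymm_le⟩ := hC (g := fun z => f 0 - f z)
    (measurable_const.sub hf.continuous.measurable) hint
  have hanti := integral_prod_eq_zero_of_antisymm (μ := μ)
    (F := fun q => expWeight (finrank ℝ E) ‖q.1‖ * centeredDifference (finrank ℝ E + γ) f q.1 q.2 -
      (f 0 - f q.2) * symmetrizedKernel (finrank ℝ E) (finrank ℝ E + γ) q.2 q.1) fun q => by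
    simp only [expWeight_mul_centeredDifference_sub, Prod.fst_swap, Prod.snd_swap]
    rw [norm_sub_rev]
    ring
  rw [integral_sub hpair hsymm, sub_eq_zero, integral_prod _ hpair] at hanti
  rw [hfibre, hanti]
  exact ⟨hpair.integral_prod_left, hsymm_le⟩

end FracLaplacian

end

/-- Weighted inequality for the dissipation term: with
`Λ^γ f(x) = ∫ (f(x) − f(x+y))/|y|^{n+γ} dy` (normalization constant removed),
`|∫ (Λ^γ f(0) − Λ^γ f(x)) e^{−|x|}/|x|^n dx| ≤ C ∫ |f(0)−f(x)| ln(e+1/|x|)/|x|^{n+γ} dx`. -/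
theorem dissipation_weighted_inequality (n : ℕ) (hn : 2 ≤ n) (γ : ℝ)
    (hγ : γ ∈ Set.Ioo (0 : ℝ) 1) :
    ∃ C > (0 : ℝ), ∀ (f : SchwartzMap (EuclideanSpace ℝ (Fin n)) ℝ),
      |∫ x : EuclideanSpace ℝ (Fin n),
          ((∫ y : EuclideanSpace ℝ (Fin n), (f 0 - f (0 + y)) / ‖y‖ ^ ((n : ℝ) + γ)) -
            ∫ y : EuclideanSpace ℝ (Fin n), (f x - f (x + y)) / ‖y‖ ^ ((n : ℝ) + γ)) *
          Real.exp (-‖x‖) / ‖x‖ ^ (n : ℝ)| ≤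
        C * ∫ x : EuclideanSpace ℝ (Fin n),
          |f 0 - f x| * Real.log (Real.exp 1 + 1 / ‖x‖) / ‖x‖ ^ ((n : ℝ) + γ) := by
  have : Nonempty (Fin n) := ⟨⟨0, by omega⟩⟩
  obtain ⟨C, hC0, hC⟩ := dissipation_weighted_inequality_general
    (volume : Measure (EuclideanSpace ℝ (Fin n))) hγ
  refine ⟨C, hC0, fun f => ?_⟩
  obtain ⟨K, hK⟩ := exists_lipschitzWith_schwartz f
  simpa only [fracLaplacian, finrank_euclideanSpace_fin] using
    (hC hK (integrable_schwartz_sub_mul_log_div_norm_rpow volume (by linarith [hγ.1])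
      (by linarith [hγ.2]) f)).2.2
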